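/- For fixed ρ > 0, as n → ∞ one has lim (σ_S²/n) = g_S(ρ), and moreover g_S(ρ) > 0. -/

import Mathlib

open MeasureTheory ProbabilityTheory Filter Set Metric
open scoped ENNReal NNReal BigOperators Topology Classical

noncomputable section

/-- Side length `n^(1/d)` of the cube `C_n` of volume `n` in dimension `d`. -/
def sideLen (d n : ℕ) : ℝ := (n : ℝ) ^ ((d : ℝ)⁻¹)

/-- The cube `C_n = [0, L)^d`. -/
def box (d : ℕ) (L : ℝ) : Set (Fin d → ℝ) := Set.univ.pi fun _ => Set.Ico (0 : ℝ) L

/-- The Euclidean toroidal distance on the cube `[0, L)^d`. -/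
def torDist {d : ℕ} (L : ℝ) (x y : Fin d → ℝ) : ℝ :=
  Real.sqrt (∑ i, (⨅ k : ℤ, |x i - y i - k * L|) ^ 2)

/-- The toroidal ball `B_r(x) = {y ∈ C_n : D(x,y) ≤ r}`. -/
def torBall {d : ℕ} (L : ℝ) (x : Fin d → ℝ) (r : ℝ) : Set (Fin d → ℝ) :=
  {y ∈ box d L | torDist L x y ≤ r}

/-- Addition (translation) in the torus `[0, L)^d`. -/
def torAdd {d : ℕ} (L : ℝ) (y x : Fin d → ℝ) : Fin d → ℝ :=
  fun i => L * Int.fract ((y i + x i) / L)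

/-- The uniform probability measure on the cube `[0, L)^d`. -/
def uniformBox (d : ℕ) (L : ℝ) : Measure (Fin d → ℝ) :=
  ((L.toNNReal ^ d)⁻¹ : ℝ≥0) • volume.restrict (box d L)

/-- The joint law of `n` independent points uniformly distributed on the cube `C_n`
of volume `n`; a point configuration is `ω : Fin n → (Fin d → ℝ)`, with `U_i = ω i`. -/
def binppLaw (d n : ℕ) : Measure (Fin n → Fin d → ℝ) :=
  Measure.pi fun _ => uniformBox d (sideLen d n)

/-- The total covered volume `V` of the union of toroidal balls of radius `ρ`
centered at the `n` points. -/
def coveredVol (d n : ℕ) (ρ : ℝ) (ω : Fin n → Fin d → ℝ) : ℝ :=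
  (volume (⋃ i, torBall (sideLen d n) (ω i) ρ)).toReal

/-- The number `S` of isolated points: indices `i` with `𝒰_n ∩ B_ρ(U_i) = {U_i}`. -/
def isolCount (d n : ℕ) (ρ : ℝ) (ω : Fin n → Fin d → ℝ) : ℝ :=
  ∑ i, if Set.range ω ∩ torBall (sideLen d n) (ω i) ρ = {ω i} then 1 else 0

/-- `π_d`: the volume of the unit ball in `ℝ^d`. -/
def unitBallVol (d : ℕ) : ℝ :=
  (volume (Metric.closedBall (0 : EuclideanSpace ℝ (Fin d)) 1)).toReal

/-- `φ = π_d ρ^d`. -/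
def phi (d : ℕ) (ρ : ℝ) : ℝ := unitBallVol d * ρ ^ d

/-- The standard normal cumulative distribution function. -/
def stdGaussCDF (t : ℝ) : ℝ := (gaussianReal 0 1 (Set.Iic t)).toReal

/-- The Kolmogorov distance `D_X` between the law of the standardized version of `X`
and the standard normal. -/
def kolDist {Ω : Type*} [MeasurableSpace Ω] (P : Measure Ω) (X : Ω → ℝ) : ℝ :=
  ⨆ t : ℝ,
    |(P {ω | (X ω - ∫ x, X x ∂P) / Real.sqrt (variance X P) ≤ t}).toReal - stdGaussCDF t|

/-- A fixed unit vector in `ℝ^d` (junk value `0` if `d = 0`). -/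
def unitVec (d : ℕ) : EuclideanSpace ℝ (Fin d) :=
  if h : 0 < d then EuclideanSpace.single (⟨0, h⟩ : Fin d) 1 else 0

/-- `ω_d(r)`: the volume of the union of two unit balls in `ℝ^d` whose centers are
at distance `r` apart. -/
def omegaVol (d : ℕ) (r : ℝ) : ℝ :=
  (volume (Metric.closedBall (0 : EuclideanSpace ℝ (Fin d)) 1 ∪
      Metric.closedBall (r • unitVec d) 1)).toReal

/-- The integral `J_{r,d}(ρ) = d π_d ∫_0^r exp(-ρ^d ω_d(t)) t^{d-1} dt`. -/
def Jint (r : ℝ) (d : ℕ) (ρ : ℝ) : ℝ :=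
  d * unitBallVol d * ∫ t in (0:ℝ)..r, Real.exp (-(ρ ^ d * omegaVol d t)) * t ^ (d - 1)

/-- The limiting variance density `g_V(ρ)`. -/
def gV (d : ℕ) (ρ : ℝ) : ℝ :=
  ρ ^ d * Jint 2 d ρ - (2 ^ d * phi d ρ + phi d ρ ^ 2) * Real.exp (-(2 * phi d ρ))

/-- The limiting variance density `g_S(ρ)`. -/
def gS (d : ℕ) (ρ : ℝ) : ℝ :=
  Real.exp (-phi d ρ) - (1 + (2 ^ d - 2) * phi d ρ + phi d ρ ^ 2) * Real.exp (-(2 * phi d ρ))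
    + ρ ^ d * (Jint 2 d ρ - Jint 1 d ρ)

/-- `κ_d`: the maximum number of closed unit balls in `ℝ^d` that can be packed so that
they all intersect a closed unit ball at the origin but are pairwise disjoint. -/
def kappa (d : ℕ) : ℕ :=
  sSup {k : ℕ | ∃ c : Fin k → EuclideanSpace ℝ (Fin d),
    (∀ i, (Metric.closedBall (c i) 1 ∩ Metric.closedBall 0 1).Nonempty) ∧
    Pairwise fun i j => Disjoint (Metric.closedBall (c i) 1) (Metric.closedBall (c j) 1)}

/-- `η_V(n, ρ)`. -/
def etaV (d n : ℕ) (ρ : ℝ) : ℝ :=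
  2 * phi d ρ ^ 2 * ((3 ^ d + 1) * phi d ρ + 1) ^ 2 *
      (1 + (2 ^ d + 1) * 6 ^ d * phi d ρ +
        ((2 * n - 6 ^ d * phi d ρ) / (n - 6 ^ d * phi d ρ)) * 6 ^ (2 * d) * phi d ρ ^ 2) +
    2 * phi d ρ ^ 4 *
      (3 * (4 ^ d + 2 ^ d) * phi d ρ +
        3 * 4 ^ d * phi d ρ ^ 2 * ((2 * n - 3 * 2 ^ d * phi d ρ) / (n - 3 * 2 ^ d * phi d ρ)) +
        4 + 2 / n)

/-- `η_S(n, ρ)`. -/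
def etaS (d n : ℕ) (ρ : ℝ) : ℝ :=
  2 * (1 + 2 * (kappa d : ℝ)) ^ 2 *
      (1 + (2 ^ d + 1) * 3 ^ d * phi d ρ +
        ((2 * n - 3 ^ d * phi d ρ) / (n - 3 ^ d * phi d ρ)) * 9 ^ d * phi d ρ ^ 2) +
    (((1 : ℝ) + kappa d) ^ 2 / 2) *
      ((2 ^ d + 2 * 3 ^ d + 3) * phi d ρ +
        (2 ^ (d + 1) + 1) *
          ((2 * n - (2 ^ (d + 1) + 1) * phi d ρ) / (n - (2 ^ (d + 1) + 1) * phi d ρ)) *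
          phi d ρ ^ 2 +
        (4 * n - 2) / (n - 1))

/-! The Euclidean torus is a quotient group, so after translating one point to the origin, a point
is isolated with probability `(1 - φ / n) ^ (n - 1)`, and two points at displacement `u ∉ B`, where
`B` is the ball of radius `ρ`, are both isolated with probability
`(1 - vol (B ∪ (B + u)) / n) ^ (n - 2)`. The two balls are disjoint when `‖u‖ > 2 ρ`; on the annulus
`ρ < ‖u‖ ≤ 2 ρ` the torus looks Euclidean, and polar coordinates give an integral over `[1, 2]` that
tends to `J_2 - J_1`. In the variance, what is left of the two terms of order `n` is
`n ((1 - φ / n) ^ (2 (n - 1)) - (1 - 2 φ / n) ^ (n - 1)) → φ ^ 2 e ^ (-2 φ)`, since the two bases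
differ by `(φ / n) ^ 2`. For positivity, `ω_d ≤ 2 π_d` bounds the annulus term below by
`(2 ^ d - 1) φ e ^ (-2 φ)`, which reduces the claim to `1 - φ + φ ^ 2 < e ^ φ`. -/

section RealLimits

lemma tendsto_one_sub_div_pow_sub (c : ℝ) (k : ℕ) :
    Tendsto (fun n : ℕ => (1 - c / n) ^ (n - k)) atTop (𝓝 (Real.exp (-c))) := by
  have hbase : Tendsto (fun n : ℕ => 1 - c / (n : ℝ)) atTop (𝓝 1) := by
    simpa using (tendsto_const_div_atTop_nhds_zero_nat c).const_sub 1
  have hfull : Tendsto (fun n : ℕ => (1 - c / n) ^ n) atTop (𝓝 (Real.exp (-c))) :=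
    (Real.tendsto_one_add_div_pow_exp (-c)).congr fun n => by rw [neg_div, ← sub_eq_add_neg]
  have hquot : Tendsto (fun n : ℕ => (1 - c / n) ^ n / (1 - c / n) ^ k) atTop
      (𝓝 (Real.exp (-c))) := by
    have := hfull.div (hbase.pow k) (by simp)
    rwa [one_pow, div_one] at this
  refine hquot.congr' ?_
  filter_upwards [hbase.eventually_ne one_ne_zero, eventually_ge_atTop k] with n hne hk
  rw [pow_sub₀ _ hne hk, div_eq_mul_inv]

lemma pow_sub_pow_mem_Icc {x y : ℝ} (hx : 0 ≤ x) (hxy : x ≤ y) (n : ℕ) :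
    y ^ n - x ^ n ∈ Icc (n * x ^ (n - 1) * (y - x)) (n * y ^ (n - 1) * (y - x)) := by
  have hterm : ∀ i ∈ Finset.range n,
      y ^ i * x ^ (n - 1 - i) ∈ Icc (x ^ (n - 1)) (y ^ (n - 1)) := by
    intro i hi
    have hsplit (z : ℝ) : z ^ (n - 1) = z ^ i * z ^ (n - 1 - i) := by
      rw [← pow_add, Nat.add_sub_cancel' (Nat.le_sub_one_of_lt (Finset.mem_range.1 hi))]
    rw [hsplit x, hsplit y]
    have hy := hx.trans hxy
    constructor <;> gcongr
  have hlower := Finset.card_nsmul_le_sum _ _ _ fun i hi => (hterm i hi).1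
  have hupper := Finset.sum_le_card_nsmul _ _ _ fun i hi => (hterm i hi).2
  rw [Finset.card_range, nsmul_eq_mul] at hlower hupper
  rw [← geom_sum₂_mul]
  have := sub_nonneg.2 hxy
  constructor <;> gcongr

lemma tendsto_mul_sq_pow_sub_pow (p : ℝ) :
    Tendsto (fun n : ℕ => n * (((1 - p / n) ^ 2) ^ (n - 1) - (1 - 2 * p / n) ^ (n - 1))) atTop
      (𝓝 (p ^ 2 * Real.exp (-(2 * p)))) := by
  have hfactor : Tendsto (fun n : ℕ => (1 - 1 / (n : ℝ)) * p ^ 2) atTop (𝓝 (p ^ 2)) := by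
    simpa using ((tendsto_const_div_atTop_nhds_zero_nat (1 : ℝ)).const_sub 1).mul_const (p ^ 2)
  have hlower := hfactor.mul (tendsto_one_sub_div_pow_sub (2 * p) 2)
  have hupper := hfactor.mul ((tendsto_one_sub_div_pow_sub p 2).pow 2)
  rw [← Real.exp_nat_mul, Nat.cast_ofNat, mul_neg] at hupper
  have hbounds : ∀ᶠ n : ℕ in atTop,
      n * (((1 - p / n) ^ 2) ^ (n - 1) - (1 - 2 * p / n) ^ (n - 1)) ∈
        Icc ((1 - 1 / (n : ℝ)) * p ^ 2 * (1 - 2 * p / n) ^ (n - 2))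
          ((1 - 1 / (n : ℝ)) * p ^ 2 * ((1 - p / n) ^ (n - 2)) ^ 2) := by
    filter_upwards [eventually_ge_atTop 1,
      tendsto_natCast_atTop_atTop.eventually_ge_atTop (2 * p)] with n hn hpn
    have hn0 : (0 : ℝ) < n := by exact_mod_cast hn
    have hgap : (1 - p / n) ^ 2 - (1 - 2 * p / n) = p ^ 2 / (n : ℝ) ^ 2 := by
      field_simp
      ring
    have hx : 0 ≤ 1 - 2 * p / n := sub_nonneg.2 ((div_le_one hn0).2 hpn)
    have hxy : 1 - 2 * p / n ≤ (1 - p / n) ^ 2 := sub_nonneg.1 (hgap ▸ by positivity)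
    obtain ⟨hl, hu⟩ := pow_sub_pow_mem_Icc hx hxy (n - 1)
    have hscale (z : ℝ) : n * (((n - 1 : ℕ) : ℝ) * z * (p ^ 2 / (n : ℝ) ^ 2)) =
        (1 - 1 / (n : ℝ)) * p ^ 2 * z := by
      rw [Nat.cast_pred hn]
      field_simp
    rw [hgap, Nat.sub_sub, one_add_one_eq_two] at hl hu
    rw [pow_right_comm (1 - p / n) 2 (n - 2)] at hu
    exact ⟨hscale _ ▸ mul_le_mul_of_nonneg_left hl hn0.le,
      hscale _ ▸ mul_le_mul_of_nonneg_left hu hn0.le⟩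
  exact tendsto_of_tendsto_of_tendsto_of_le_of_le' hlower hupper
    (hbounds.mono fun _ h => h.1) (hbounds.mono fun _ h => h.2)

lemma tendsto_intervalIntegral_one_sub_div_pow_sub_mul {h w : ℝ → ℝ} (hh : Measurable h) {C : ℝ}
    (hh_mem : ∀ t, h t ∈ Icc 0 C) {a b : ℝ} (hw : IntervalIntegrable w volume a b) (k : ℕ) :
    Tendsto (fun n : ℕ => ∫ t in a..b, (1 - h t / n) ^ (n - k) * w t) atTop
      (𝓝 (∫ t in a..b, Real.exp (-h t) * w t)) := by
  refine intervalIntegral.tendsto_integral_filter_of_dominated_convergence (fun t => |w t|)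
    (Eventually.of_forall fun n => ?_) ?_ hw.abs
    (Eventually.of_forall fun t _ => (tendsto_one_sub_div_pow_sub (h t) k).mul_const _)
  · exact (((hh.div_const _).const_sub _).pow_const _).aestronglyMeasurable.mul
      hw.aestronglyMeasurable_restrict_uIoc
  · filter_upwards [eventually_ge_atTop 1,
      tendsto_natCast_atTop_atTop.eventually_ge_atTop C] with n hn hCn
    refine Eventually.of_forall fun t _ => ?_
    have hn0 : (0 : ℝ) < n := by exact_mod_cast hn
    have hle : h t / n ≤ 1 := (div_le_one hn0).2 ((hh_mem t).2.trans hCn)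
    have hnonneg : 0 ≤ h t / n := div_nonneg (hh_mem t).1 hn0.le
    rw [norm_mul, norm_pow, Real.norm_of_nonneg (sub_nonneg.2 hle)]
    exact mul_le_of_le_one_left (abs_nonneg _) (pow_le_one₀ (sub_nonneg.2 hle) (by linarith))

lemma one_sub_add_sq_lt_exp {p : ℝ} (hp : 0 < p) : 1 - p + p ^ 2 < Real.exp p := by
  have htaylor : 1 + p + p ^ 2 / 2 + p ^ 3 / 6 ≤ Real.exp p := by
    have := Real.sum_le_exp_of_nonneg hp.le 4
    norm_num [Finset.sum_range_succ, Nat.factorial] at this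
    linarith
  nlinarith [mul_pos hp hp, mul_nonneg hp.le (sq_nonneg (p - 3 / 2))]

end RealLimits

section IndicatorVariance

variable {Ω : Type*} [MeasurableSpace Ω] {P : Measure Ω} [IsProbabilityMeasure P]

lemma covariance_indicator_one {s t : Set Ω} (hs : MeasurableSet s) (ht : MeasurableSet t) :
    covariance (s.indicator 1) (t.indicator 1) P = P.real (s ∩ t) - P.real s * P.real t := by
  have hmem {u : Set Ω} (hu : MeasurableSet u) : MemLp (u.indicator (1 : Ω → ℝ)) 2 P :=
    (memLp_const 1).indicator hu
  rw [covariance_eq_sub (hmem hs) (hmem ht), ← inter_indicator_one,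
    integral_indicator_one (hs.inter ht), integral_indicator_one hs, integral_indicator_one ht]

lemma variance_sum_indicator_one {ι : Type*} [Fintype ι] {E : ι → Set Ω}
    (hE : ∀ i, MeasurableSet (E i)) {p q : ℝ} (hp : ∀ i, P.real (E i) = p)
    (hq : ∀ i j, i ≠ j → P.real (E i ∩ E j) = q) :
    variance (fun ω => ∑ i, (E i).indicator 1 ω) P =
      Fintype.card ι * (p + (Fintype.card ι - 1) * q - Fintype.card ι * p ^ 2) := by
  have hcov (i j : ι) : covariance ((E i).indicator 1) ((E j).indicator 1) P =
      (q - p ^ 2) + if i = j then p - q else 0 := by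
    rw [covariance_indicator_one (hE i) (hE j), hp, hp]
    split_ifs with hij
    · rw [hij, inter_self, hp]
      ring
    · rw [hq i j hij]
      ring
  have hmem (i : ι) : MemLp ((E i).indicator (1 : Ω → ℝ)) 2 P := (memLp_const 1).indicator (hE i)
  rw [variance_fun_sum hmem]
  simp only [hcov, Finset.sum_add_distrib, Finset.sum_ite_eq, Finset.mem_univ, if_true,
    Finset.sum_const, Finset.card_univ, nsmul_eq_mul]
  ring

end IndicatorVariance

section IsolatedEvent

lemma pi_apply_eq_lintegral_insertNth {X : Type*} [MeasurableSpace X] (ν : Measure X)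
    [SigmaFinite ν] {n : ℕ} (i : Fin (n + 1)) {E : Set (Fin (n + 1) → X)} (hE : MeasurableSet E) :
    Measure.pi (fun _ => ν) E =
      ∫⁻ x, Measure.pi (fun _ : Fin n => ν) {y | i.insertNth x y ∈ E} ∂ν := by
  have hmp := (measurePreserving_piFinSuccAbove (fun _ : Fin (n + 1) => ν) i).symm
  rw [← hmp.measure_preimage_equiv,
    Measure.prod_apply ((MeasurableEquiv.piFinSuccAbove (fun _ => X) i).symm.measurable hE)]
  rfl

variable {G : Type*} [AddGroup G]

/-- The event that the point with index `i` is isolated in the configuration `ω`, where the points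
close to `x` are those of `K + x`. -/
def isolatedEvent {ι : Type*} (K : Set G) (i : ι) : Set (ι → G) :=
  {ω | ∀ k ≠ i, ω k - ω i ∉ K}

variable [MeasurableSpace G]

lemma pi_setOf_sub_const_mem [MeasurableAdd G] {ι : Type*} [Fintype ι] (ν : Measure G)
    [SigmaFinite ν] [ν.IsAddRightInvariant] (x : G) (F : Set (ι → G)) :
    Measure.pi (fun _ : ι => ν) {y | (fun k => y k - x) ∈ F} = Measure.pi (fun _ => ν) F := by
  simp only [sub_eq_add_neg]
  exact measure_preimage_add_right (Measure.pi fun _ : ι => ν) (fun _ => -x) F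

variable [MeasurableSub₂ G] {K : Set G}

lemma measurableSet_isolatedEvent {ι : Type*} [Countable ι] (hK : MeasurableSet K) (i : ι) :
    MeasurableSet (isolatedEvent K i) := by
  simp only [isolatedEvent, ofPred_forall]
  exact .iInter fun k => .iInter fun _ =>
    (((measurable_pi_apply k).sub (measurable_pi_apply i)) hK).compl

lemma measurable_measure_union_preimage_sub (ν : Measure G) [SFinite ν] (hK : MeasurableSet K) :
    Measurable fun u => ν (K ∪ (· - u) ⁻¹' K) :=
  measurable_measure_prodMk_left
    ((measurable_snd hK).union ((measurable_snd.sub measurable_fst) hK))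

lemma measurable_one_sub_measureReal_union_pow (ν : Measure G) [SFinite ν] (hK : MeasurableSet K)
    (m : ℕ) : Measurable fun u => (1 - ν.real (K ∪ (· - u) ⁻¹' K)) ^ m :=
  ((measurable_measure_union_preimage_sub ν hK).ennreal_toReal.const_sub 1).pow_const m

variable [MeasurableAdd G] (ν : Measure G) [IsProbabilityMeasure ν] [ν.IsAddRightInvariant]

lemma pi_isolatedEvent (hK : MeasurableSet K) {m : ℕ} (i : Fin (m + 1)) :
    Measure.pi (fun _ => ν) (isolatedEvent K i) = ν Kᶜ ^ m := by
  have hsection (x : G) : {y : Fin m → G | i.insertNth x y ∈ isolatedEvent K i} =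
      {y | (fun k => y k - x) ∈ univ.pi fun _ => Kᶜ} := by
    ext y
    simp [isolatedEvent, i.forall_iff_succAbove]
  rw [pi_apply_eq_lintegral_insertNth ν i (measurableSet_isolatedEvent hK i)]
  simp only [hsection, pi_setOf_sub_const_mem, Measure.pi_pi, Finset.prod_const, Finset.card_univ,
    Fintype.card_fin, lintegral_const, measure_univ, mul_one]

lemma pi_isolatedEvent_inter (hK : MeasurableSet K) (hK_neg : ∀ x, -x ∈ K ↔ x ∈ K) {m : ℕ}
    {i j : Fin (m + 2)} (hij : i ≠ j) :
    Measure.pi (fun _ => ν) (isolatedEvent K i ∩ isolatedEvent K j) =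
      ∫⁻ u in Kᶜ, ν (K ∪ (· - u) ⁻¹' K)ᶜ ^ m ∂ν := by
  obtain ⟨j, rfl⟩ := Fin.exists_succAbove_eq hij.symm
  let F : Set (Fin (m + 1) → G) := {y | ∀ k, y k ∉ K} ∩ isolatedEvent K j
  have hF : MeasurableSet F := by
    refine .inter ?_ (measurableSet_isolatedEvent hK j)
    simp only [ofPred_forall]
    exact .iInter fun k => (measurable_pi_apply k hK).compl
  have hfst (x : G) : {y : Fin (m + 1) → G |
      i.insertNth x y ∈ isolatedEvent K i ∩ isolatedEvent K (i.succAbove j)} =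
      {y | (fun k => y k - x) ∈ F} := by
    ext y
    have hsymm : x - y j ∈ K ↔ y j - x ∈ K := by
      rw [← neg_sub, hK_neg]
    simp [F, isolatedEvent, i.forall_iff_succAbove, hsymm]
    grind
  have hsnd (u : G) : Measure.pi (fun _ => ν) {y : Fin m → G | j.insertNth u y ∈ F} =
      Kᶜ.indicator (fun u => ν (K ∪ (· - u) ⁻¹' K)ᶜ ^ m) u := by
    by_cases hu : u ∈ K
    · simp [F, hu, j.forall_iff_succAbove]
    · have : {y : Fin m → G | j.insertNth u y ∈ F} =
          univ.pi fun _ => (K ∪ (· - u) ⁻¹' K)ᶜ := by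
        ext y
        simp [F, hu, isolatedEvent, j.forall_iff_succAbove, forall_and]
      simp [this, hu]
  rw [pi_apply_eq_lintegral_insertNth ν i ((measurableSet_isolatedEvent hK i).inter
    (measurableSet_isolatedEvent hK _))]
  simp only [hfst, pi_setOf_sub_const_mem, lintegral_const, measure_univ, mul_one]
  rw [pi_apply_eq_lintegral_insertNth ν j hF, ← lintegral_indicator hK.compl]
  exact lintegral_congr hsnd

lemma pi_real_isolatedEvent_inter (hK : MeasurableSet K) (hK_neg : ∀ x, -x ∈ K ↔ x ∈ K) {m : ℕ}
    {i j : Fin (m + 2)} (hij : i ≠ j) :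
    (Measure.pi fun _ => ν).real (isolatedEvent K i ∩ isolatedEvent K j) =
      ∫ u in Kᶜ, (1 - ν.real (K ∪ (· - u) ⁻¹' K)) ^ m ∂ν := by
  have hunion (u : G) : MeasurableSet (K ∪ (· - u) ⁻¹' K) :=
    hK.union (measurable_id.sub_const u hK)
  have hmeas : Measurable fun u => ν (K ∪ (· - u) ⁻¹' K)ᶜ ^ m := by
    simp only [measure_compl (hunion _) (measure_ne_top ν _), measure_univ]
    exact ((measurable_measure_union_preimage_sub ν hK).const_sub 1).pow_const m
  rw [measureReal_def, pi_isolatedEvent_inter ν hK hK_neg hij,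
    ← integral_toReal hmeas.aemeasurable
      (Eventually.of_forall fun u => ENNReal.pow_lt_top (measure_lt_top ν _))]
  simp only [ENNReal.toReal_pow, ← measureReal_def, probReal_compl_eq_one_sub (hunion _)]

theorem variance_sum_indicator_isolatedEvent (hK : MeasurableSet K)
    (hK_neg : ∀ x, -x ∈ K ↔ x ∈ K) {n : ℕ} (hn : 2 ≤ n) :
    variance (fun ω => ∑ i, (isolatedEvent K i).indicator 1 ω) (Measure.pi fun _ : Fin n => ν) =
      n * ((1 - ν.real K) ^ (n - 1)
        + (n - 1) * ∫ u in Kᶜ, (1 - ν.real (K ∪ (· - u) ⁻¹' K)) ^ (n - 2) ∂ν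
        - n * ((1 - ν.real K) ^ (n - 1)) ^ 2) := by
  obtain ⟨m, rfl⟩ := Nat.exists_eq_add_of_le' hn
  have hsingle (i : Fin (m + 2)) : (Measure.pi fun _ => ν).real (isolatedEvent K i) =
      (1 - ν.real K) ^ (m + 1) := by
    rw [measureReal_def, pi_isolatedEvent ν hK, ENNReal.toReal_pow, ← measureReal_def,
      probReal_compl_eq_one_sub hK]
  rw [variance_sum_indicator_one (measurableSet_isolatedEvent hK) hsingle
    fun i j hij => pi_real_isolatedEvent_inter ν hK hK_neg hij, Fintype.card_fin]
  rfl

end IsolatedEvent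

section EuclideanBalls

variable {d : ℕ}

lemma volume_real_closedBall_eq_phi {r : ℝ} (hr : 0 ≤ r) :
    volume.real (closedBall (0 : EuclideanSpace ℝ (Fin d)) r) = phi d r := by
  rw [Measure.addHaar_real_closedBall' _ _ hr, finrank_euclideanSpace_fin, mul_comm]
  rfl

lemma norm_unitVec (hd : 1 ≤ d) : ‖unitVec d‖ = 1 := by
  rw [unitVec, dif_pos (Nat.lt_of_succ_le hd), PiLp.norm_single, norm_one]

lemma volume_real_closedBall_union_of_norm_eq {a b : EuclideanSpace ℝ (Fin d)} (h : ‖a‖ = ‖b‖)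
    (r : ℝ) :
    volume.real (closedBall 0 r ∪ closedBall a r) =
      volume.real (closedBall 0 r ∪ closedBall b r) := by
  let R := (ℝ ∙ (a - b))ᗮ.reflection
  have hR : R.symm a = b := by
    rw [Submodule.reflection_symm]
    exact Submodule.reflection_sub h
  rw [← R.measurePreserving.measureReal_preimage
    (measurableSet_closedBall.union measurableSet_closedBall).nullMeasurableSet,
    preimage_union, R.preimage_closedBall, R.preimage_closedBall, map_zero, hR]

open scoped Pointwise in
lemma volume_real_closedBall_union (hd : 1 ≤ d) {r : ℝ} (hr : 0 < r)
    (z : EuclideanSpace ℝ (Fin d)) :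
    volume.real (closedBall 0 r ∪ closedBall z r) = r ^ d * omegaVol d (‖z‖ / r) := by
  have hscale : closedBall 0 r ∪ closedBall z r =
      r • (closedBall 0 1 ∪ closedBall (r⁻¹ • z) 1) := by
    rw [smul_set_union, _root_.smul_closedBall _ _ zero_le_one,
      _root_.smul_closedBall _ _ zero_le_one, smul_zero, smul_inv_smul₀ hr.ne',
      Real.norm_of_nonneg hr.le, mul_one]
  have hnorm : ‖r⁻¹ • z‖ = ‖(‖z‖ / r) • unitVec d‖ := by
    rw [norm_smul, norm_smul, norm_unitVec hd, Real.norm_of_nonneg (by positivity),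
      Real.norm_of_nonneg (by positivity), mul_one, inv_mul_eq_div]
  rw [hscale, measureReal_def, Measure.addHaar_smul, finrank_euclideanSpace_fin, ENNReal.toReal_mul,
    ENNReal.toReal_ofReal (abs_nonneg _), abs_of_pos (by positivity), ← measureReal_def,
    volume_real_closedBall_union_of_norm_eq hnorm]
  rfl

end EuclideanBalls

section EuclideanTorus

variable {d : ℕ} {L : ℝ}

/-- The flat torus `ℝ^d / L ℤ^d` with the quotient Euclidean norm. The cube `[0, L)^d` with its
toroidal distance is a set of representatives. -/
abbrev EuclideanTorus (d : ℕ) (L : ℝ) : Type := PiLp 2 fun _ : Fin d => AddCircle L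

/-- The quotient map `ℝ^d → ℝ^d / L ℤ^d`. -/
def torusMk (L : ℝ) : EuclideanSpace ℝ (Fin d) →+ EuclideanTorus d L where
  toFun x := WithLp.toLp 2 fun i => (x i : AddCircle L)
  map_zero' := rfl
  map_add' _ _ := rfl

lemma iInf_abs_sub_int_mul (L t : ℝ) : (⨅ k : ℤ, |t - k * L|) = ‖(t : AddCircle L)‖ := by
  refine le_antisymm ?_ (le_ciInf fun k => ?_)
  · rw [AddCircle.norm_eq]
    exact ciInf_le ⟨0, forall_mem_range.2 fun _ => abs_nonneg _⟩ (round (L⁻¹ * t))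
  · have hperiod : ((t - k * L : ℝ) : AddCircle L) = t := by
      rw [AddCircle.coe_sub, sub_eq_self, AddCircle.coe_eq_zero_iff]
      exact ⟨k, zsmul_eq_mul _ _⟩
    rw [← hperiod]
    exact QuotientAddGroup.norm_mk_le_norm

lemma torDist_eq_norm_torusMk_sub (x y : Fin d → ℝ) :
    torDist L x y = ‖torusMk L (WithLp.toLp 2 x) - torusMk L (WithLp.toLp 2 y)‖ := by
  simp only [torDist, iInf_abs_sub_int_mul, PiLp.norm_eq_of_L2]
  rfl

lemma norm_torusMk_le (z : EuclideanSpace ℝ (Fin d)) : ‖torusMk L z‖ ≤ ‖z‖ := by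
  rw [PiLp.norm_eq_of_L2, EuclideanSpace.norm_eq]
  gcongr with i
  exact QuotientAddGroup.norm_mk_le_norm

lemma norm_torusMk_of_forall_abs_le (hL : 0 < L) {z : EuclideanSpace ℝ (Fin d)}
    (hz : ∀ i, |z i| ≤ L / 2) : ‖torusMk L z‖ = ‖z‖ := by
  have hcoord (i : Fin d) : ‖torusMk L z i‖ = ‖z i‖ :=
    (AddCircle.norm_coe_eq_abs_iff _ hL.ne').2 (by rw [abs_of_pos hL]; exact hz i)
  simp only [PiLp.norm_eq_of_L2, hcoord]

lemma norm_torusMk (hL : 0 < L) {z : EuclideanSpace ℝ (Fin d)} (hz : ‖z‖ ≤ L / 2) :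
    ‖torusMk L z‖ = ‖z‖ :=
  norm_torusMk_of_forall_abs_le hL fun i => (PiLp.norm_apply_le z i).trans hz

lemma closedBall_inter_preimage_torusMk_closedBall (r : ℝ) :
    closedBall (0 : EuclideanSpace ℝ (Fin d)) r ∩ torusMk L ⁻¹' closedBall 0 r =
      closedBall 0 r := by
  refine inter_eq_left.2 fun z hz => ?_
  rw [mem_preimage, mem_closedBall_zero_iff]
  exact (norm_torusMk_le z).trans (mem_closedBall_zero_iff.1 hz)

lemma measurable_torusMk : Measurable (torusMk L : EuclideanSpace ℝ (Fin d) → EuclideanTorus d L) :=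
  (WithLp.measurable_toLp 2 _).comp <| measurable_pi_lambda _ fun i =>
    AddCircle.measurable_mk'.comp (measurable_pi_apply i |>.comp (WithLp.measurable_ofLp 2 _))

variable [Fact (0 < L)]

/-- The uniform probability measure on the torus `ℝ^d / L ℤ^d`. -/
def uniformTorus (d : ℕ) (L : ℝ) [Fact (0 < L)] : Measure (EuclideanTorus d L) :=
  ((L.toNNReal ^ d)⁻¹ : ℝ≥0) • (volume : Measure (Fin d → AddCircle L)).map (WithLp.toLp 2)

instance : IsProbabilityMeasure (uniformTorus d L) where
  measure_univ := by
    have hL : L.toNNReal ≠ 0 := (Real.toNNReal_pos.2 Fact.out).ne'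
    rw [uniformTorus, Measure.smul_apply, Measure.map_apply (WithLp.measurable_toLp 2 _) .univ,
      preimage_univ, volume_pi, Measure.pi_univ]
    simp only [AddCircle.measure_univ, ENNReal.ofReal, Finset.prod_const, Finset.card_univ,
      Fintype.card_fin]
    rw [ENNReal.smul_def, smul_eq_mul, ← ENNReal.coe_pow, ← ENNReal.coe_mul,
      inv_mul_cancel₀ (pow_ne_zero _ hL), ENNReal.coe_one]

instance : (uniformTorus d L).IsAddRightInvariant where
  map_add_right_eq_self g := by
    have htoLp := WithLp.measurable_toLp 2 (Fin d → AddCircle L)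
    rw [uniformTorus, Measure.map_smul, Measure.map_map (measurable_add_const g) htoLp]
    conv_rhs => rw [← map_add_right_eq_self (volume : Measure (Fin d → AddCircle L)) g.ofLp,
      Measure.map_map htoLp (measurable_add_const _)]
    rfl

lemma measurePreserving_torusMk_Ioc (a : ℝ) :
    MeasurePreserving (fun x : Fin d → ℝ => torusMk L (WithLp.toLp 2 x))
      (((L.toNNReal ^ d)⁻¹ : ℝ≥0) • volume.restrict (univ.pi fun _ => Ioc a (a + L)))
      (uniformTorus d L) := by
  have hcoord : MeasurePreserving (fun (x : Fin d → ℝ) i => (x i : AddCircle L))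
      (volume.restrict (univ.pi fun _ => Ioc a (a + L))) volume := by
    rw [volume_pi, Measure.restrict_pi_pi]
    exact measurePreserving_pi _ _ fun _ => AddCircle.measurePreserving_mk L a
  have htoLp : MeasurePreserving (WithLp.toLp 2) volume
      ((volume : Measure (Fin d → AddCircle L)).map (WithLp.toLp 2)) :=
    (WithLp.measurable_toLp 2 _).measurePreserving _
  exact (htoLp.comp hcoord).smul_measure _

lemma measurePreserving_torusMk_uniformBox :
    MeasurePreserving (fun x : Fin d → ℝ => torusMk L (WithLp.toLp 2 x)) (uniformBox d L)
      (uniformTorus d L) := by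
  have hbox : volume.restrict (box d L) =
      volume.restrict (univ.pi fun _ : Fin d => Ioc (0 : ℝ) (0 + L)) := by
    rw [box, volume_pi, Measure.restrict_pi_pi, Measure.restrict_pi_pi, zero_add]
    simp only [restrict_Ico_eq_restrict_Ioc]
  rw [uniformBox, hbox]
  exact measurePreserving_torusMk_Ioc 0

instance : IsProbabilityMeasure (uniformBox d L) :=
  have : IsProbabilityMeasure ((uniformBox d L).map fun x => torusMk L (WithLp.toLp 2 x)) := by
    rw [measurePreserving_torusMk_uniformBox.map_eq]
    infer_instance
  Measure.isProbabilityMeasure_of_map fun x => torusMk L (WithLp.toLp 2 x)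

lemma uniformTorus_restrict {r : ℝ} (hr : r < L / 2) {s : Set (EuclideanTorus d L)}
    (hs : MeasurableSet s) (hsr : s ⊆ closedBall 0 r) :
    (uniformTorus d L).restrict s = ((L.toNNReal ^ d)⁻¹ : ℝ≥0) •
      (volume.restrict (closedBall 0 r ∩ torusMk L ⁻¹' s)).map (torusMk L) := by
  have hL : 0 < L := Fact.out
  let cube : Set (EuclideanSpace ℝ (Fin d)) :=
    WithLp.ofLp ⁻¹' univ.pi fun _ => Ioc (-(L / 2)) (-(L / 2) + L)
  have hcube_meas : MeasurableSet cube :=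
    WithLp.measurable_ofLp 2 _ (.univ_pi fun _ => measurableSet_Ioc)
  have hcube : uniformTorus d L =
      ((L.toNNReal ^ d)⁻¹ : ℝ≥0) • (volume.restrict cube).map (torusMk L) := by
    have htoLp := (PiLp.volume_preserving_toLp (Fin d)).restrict_preimage hcube_meas
    rw [← htoLp.map_eq, Measure.map_map measurable_torusMk htoLp.measurable, ← Measure.map_smul]
    exact (measurePreserving_torusMk_Ioc _).map_eq.symm
  have hball : torusMk L ⁻¹' s ∩ cube = closedBall 0 r ∩ torusMk L ⁻¹' s := by
    ext z
    rw [inter_comm, mem_inter_iff, mem_inter_iff, and_congr_left_iff, mem_closedBall_zero_iff]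
    intro hz
    refine ⟨fun hzc => ?_, fun hzr i _ => ?_⟩
    · rw [← norm_torusMk_of_forall_abs_le hL fun i => ?_]
      · exact mem_closedBall_zero_iff.1 (hsr hz)
      · exact abs_le.2 ⟨(hzc i trivial).1.le, by linarith [(hzc i trivial).2]⟩
    · have := abs_le.1 ((PiLp.norm_apply_le z i).trans hzr)
      constructor <;> linarith [this.1, this.2]
  rw [hcube, Measure.restrict_smul, Measure.restrict_map measurable_torusMk hs,
    Measure.restrict_restrict (measurable_torusMk hs), hball]

lemma setIntegral_uniformTorus {r : ℝ} (hr : r < L / 2) {s : Set (EuclideanTorus d L)}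
    (hs : MeasurableSet s) (hsr : s ⊆ closedBall 0 r) {f : EuclideanTorus d L → ℝ}
    (hf : Measurable f) :
    ∫ u in s, f u ∂uniformTorus d L =
      (∫ z in closedBall 0 r ∩ torusMk L ⁻¹' s, f (torusMk L z)) / L ^ d := by
  rw [uniformTorus_restrict hr hs hsr, integral_smul_nnreal_measure,
    integral_map measurable_torusMk.aemeasurable hf.aestronglyMeasurable,
    NNReal.smul_def, smul_eq_mul, NNReal.coe_inv, NNReal.coe_pow,
    Real.coe_toNNReal L (Fact.out : 0 < L).le, inv_mul_eq_div]

lemma uniformTorus_real {r : ℝ} (hr : r < L / 2) {s : Set (EuclideanTorus d L)}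
    (hs : MeasurableSet s) (hsr : s ⊆ closedBall 0 r) :
    (uniformTorus d L).real s = volume.real (closedBall 0 r ∩ torusMk L ⁻¹' s) / L ^ d := by
  simpa using setIntegral_uniformTorus hr hs hsr (f := fun _ => 1) measurable_const

lemma uniformTorus_real_closedBall {r : ℝ} (hr₀ : 0 ≤ r) (hr : r < L / 2) :
    (uniformTorus d L).real (closedBall 0 r) = phi d r / L ^ d := by
  rw [uniformTorus_real hr measurableSet_closedBall Subset.rfl,
    closedBall_inter_preimage_torusMk_closedBall, volume_real_closedBall_eq_phi hr₀]

lemma uniformTorus_real_union_closedBall_of_far {r : ℝ} (hr₀ : 0 ≤ r) (hr : r < L / 2)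
    {u : EuclideanTorus d L} (hu : 2 * r < ‖u‖) :
    (uniformTorus d L).real (closedBall 0 r ∪ (· - u) ⁻¹' closedBall 0 r) =
      2 * phi d r / L ^ d := by
  have hmeas : MeasurableSet ((· - u) ⁻¹' closedBall (0 : EuclideanTorus d L) r) :=
    measurable_sub_const u measurableSet_closedBall
  have hdisj : Disjoint (closedBall 0 r) ((· - u) ⁻¹' closedBall 0 r) := by
    refine Set.disjoint_left.2 fun w hw hwu => ?_
    rw [mem_preimage, mem_closedBall_zero_iff] at hwu
    rw [mem_closedBall_zero_iff] at hw
    linarith [norm_le_norm_add_norm_sub' u w, norm_sub_rev u w]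
  rw [measureReal_union hdisj hmeas, (measurePreserving_sub_right _ u).measureReal_preimage
    measurableSet_closedBall.nullMeasurableSet, uniformTorus_real_closedBall hr₀ hr]
  ring

lemma uniformTorus_real_union_closedBall_of_near (hd : 1 ≤ d) {r : ℝ} (hr₀ : 0 < r)
    (hr : 10 * r < L) {z : EuclideanSpace ℝ (Fin d)} (hz : ‖z‖ ≤ 2 * r) :
    (uniformTorus d L).real (closedBall 0 r ∪ (· - torusMk L z) ⁻¹' closedBall 0 r) =
      r ^ d * omegaVol d (‖z‖ / r) / L ^ d := by
  have hmeas : MeasurableSet ((· - torusMk L z) ⁻¹' closedBall (0 : EuclideanTorus d L) r) :=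
    measurable_sub_const _ measurableSet_closedBall
  have hsubset : closedBall 0 r ∪ (· - torusMk L z) ⁻¹' closedBall 0 r ⊆ closedBall 0 (3 * r) := by
    intro w hw
    have hzw := norm_torusMk_le (L := L) z
    have htri := norm_le_norm_sub_add w (torusMk L z)
    simp only [mem_union, mem_preimage, mem_closedBall_zero_iff] at hw ⊢
    rcases hw with hw | hw <;> linarith
  have hpreimage : closedBall 0 (3 * r) ∩
      torusMk L ⁻¹' (closedBall 0 r ∪ (· - torusMk L z) ⁻¹' closedBall 0 r) =
      closedBall 0 r ∪ closedBall z r := by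
    ext x
    have hx : ‖x‖ ≤ ‖x - z‖ + ‖z‖ := norm_le_norm_sub_add x z
    have hxz : ‖x - z‖ ≤ ‖x‖ + ‖z‖ := norm_sub_le x z
    simp only [mem_inter_iff, mem_preimage, mem_union, mem_closedBall_iff_norm, sub_zero, ← map_sub]
    by_cases hx3 : ‖x‖ ≤ 3 * r
    · rw [norm_torusMk Fact.out (z := x) (by linarith), norm_torusMk Fact.out (by linarith)]
      exact and_iff_right hx3
    · refine iff_of_false (fun h => hx3 h.1) ?_
      rintro (h | h) <;> linarith
  rw [uniformTorus_real (r := 3 * r) (by linarith) (measurableSet_closedBall.union hmeas) hsubset,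
    hpreimage, volume_real_closedBall_union hd hr₀]

end EuclideanTorus

section OmegaVol

variable {d : ℕ} {ρ : ℝ}

lemma unitBallVol_pos : 0 < unitBallVol d :=
  ENNReal.toReal_pos (measure_closedBall_pos volume _ one_pos).ne' measure_closedBall_lt_top.ne

lemma phi_pos (hρ : 0 < ρ) : 0 < phi d ρ :=
  mul_pos unitBallVol_pos (pow_pos hρ d)

lemma phi_mul (c ρ : ℝ) : phi d (c * ρ) = c ^ d * phi d ρ := by
  simp only [phi, mul_pow, mul_left_comm]

lemma measurable_omegaVol : Measurable (omegaVol d) := by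
  have hs : MeasurableSet ({p : ℝ × EuclideanSpace ℝ (Fin d) | dist p.2 0 ≤ 1} ∪
      {p | dist p.2 (p.1 • unitVec d) ≤ 1}) :=
    (measurableSet_le (by fun_prop) measurable_const).union
      (measurableSet_le (by fun_prop) measurable_const)
  exact (measurable_measure_prodMk_left hs).ennreal_toReal

lemma omegaVol_nonneg (t : ℝ) : 0 ≤ omegaVol d t := ENNReal.toReal_nonneg

lemma omegaVol_le (t : ℝ) : omegaVol d t ≤ 2 * unitBallVol d :=
  calc omegaVol d t
      ≤ volume.real (closedBall (0 : EuclideanSpace ℝ (Fin d)) 1) +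
          volume.real (closedBall (t • unitVec d) 1) := measureReal_union_le _ _
    _ = 2 * unitBallVol d := by
      rw [Measure.addHaar_real_closedBall_center volume (t • unitVec d), ← two_mul]
      rfl

lemma pow_mul_omegaVol_mem_Icc (hρ : 0 ≤ ρ) (t : ℝ) :
    ρ ^ d * omegaVol d t ∈ Icc 0 (2 * phi d ρ) := by
  refine ⟨mul_nonneg (pow_nonneg hρ d) (omegaVol_nonneg t), ?_⟩
  rw [phi, ← mul_assoc, mul_comm]
  exact mul_le_mul_of_nonneg_right (omegaVol_le t) (pow_nonneg hρ d)

end OmegaVol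

section PolarCoordinates

lemma setIntegral_annulus_fun_norm {E : Type*} [NormedAddCommGroup E] [NormedSpace ℝ E]
    [Nontrivial E] [FiniteDimensional ℝ E] [MeasurableSpace E] [BorelSpace E] (μ : Measure E)
    [μ.IsAddHaarMeasure] (f : ℝ → ℝ) {a b : ℝ} (ha : 0 ≤ a) (hab : a ≤ b) :
    ∫ z in closedBall 0 b \ closedBall 0 a, f ‖z‖ ∂μ =
      Module.finrank ℝ E * μ.real (ball 0 1) *
        ∫ t in a..b, t ^ (Module.finrank ℝ E - 1) * f t := by
  have hindicator : (closedBall 0 b \ closedBall 0 a).indicator (fun z : E => f ‖z‖) =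
      fun z => (Ioc a b).indicator f ‖z‖ := by
    ext z
    simp only [indicator, Set.mem_sdiff, mem_closedBall_zero_iff, not_le, mem_Ioc, and_comm]
  have hIoc : Ioi 0 ∩ Ioc a b = Ioc a b := inter_eq_right.2 fun t ht => ha.trans_lt ht.1
  rw [← integral_indicator (measurableSet_closedBall.diff measurableSet_closedBall), hindicator,
    integral_fun_norm_addHaar, nsmul_eq_mul, smul_eq_mul, ← mul_assoc]
  simp only [smul_eq_mul, ← indicator_mul_right (Ioc a b) fun t => t ^ (Module.finrank ℝ E - 1)]
  rw [setIntegral_indicator measurableSet_Ioc, hIoc, intervalIntegral.integral_of_le hab]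

lemma setIntegral_annulus_fun_norm_div {d : ℕ} (hd : 1 ≤ d) (f : ℝ → ℝ) {a b ρ : ℝ}
    (ha : 0 ≤ a) (hab : a ≤ b) (hρ : 0 < ρ) :
    ∫ z in closedBall (0 : EuclideanSpace ℝ (Fin d)) (b * ρ) \ closedBall 0 (a * ρ),
        f (‖z‖ / ρ) =
      ρ ^ d * (d * unitBallVol d * ∫ t in a..b, f t * t ^ (d - 1)) := by
  have : Nonempty (Fin d) := ⟨⟨0, hd⟩⟩
  have hball : volume.real (ball (0 : EuclideanSpace ℝ (Fin d)) 1) = unitBallVol d := by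
    rw [measureReal_def, ← Measure.addHaar_unitClosedBall_eq_addHaar_unitBall, unitBallVol]
  have hsubst : ∫ t in a * ρ..b * ρ, t ^ (d - 1) * f (t / ρ) =
      ρ ^ d * ∫ t in a..b, f t * t ^ (d - 1) :=
    calc ∫ t in a * ρ..b * ρ, t ^ (d - 1) * f (t / ρ)
        = ∫ t in a * ρ..b * ρ, ρ ^ (d - 1) * (f (t / ρ) * (t / ρ) ^ (d - 1)) := by
          congr! 2 with t
          rw [div_pow]
          field_simp
      _ = ρ ^ (d - 1) * (ρ * ∫ t in a..b, f t * t ^ (d - 1)) := by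
          rw [intervalIntegral.integral_const_mul,
            intervalIntegral.integral_comp_div (fun t => f t * t ^ (d - 1)) hρ.ne',
            mul_div_cancel_right₀ _ hρ.ne', mul_div_cancel_right₀ _ hρ.ne', smul_eq_mul]
      _ = ρ ^ d * ∫ t in a..b, f t * t ^ (d - 1) := by
          rw [← mul_assoc, pow_sub_one_mul (by omega)]
  rw [setIntegral_annulus_fun_norm volume (fun t => f (t / ρ)) (by positivity) (by gcongr),
    finrank_euclideanSpace_fin, hball, hsubst]
  ring

end PolarCoordinates

section PairIntegral

/-- The binomial counterpart of `Jint 2 d ρ - Jint 1 d ρ`, in which the weight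
`exp (-ρ^d ω_d(t))` is replaced by the probability `(1 - ρ^d ω_d(t) / V)^m` that `m` uniform points
in a region of volume `V` avoid two balls of radius `ρ` whose centers are at distance `ρ t`. -/
def annulusIntegral (d : ℕ) (ρ V : ℝ) (m : ℕ) : ℝ :=
  d * unitBallVol d * ∫ t in (1 : ℝ)..2, (1 - ρ ^ d * omegaVol d t / V) ^ m * t ^ (d - 1)

variable {d : ℕ} {L : ℝ} [Fact (0 < L)] {ρ : ℝ}

lemma setIntegral_uniformTorus_annulus (hd : 1 ≤ d) (hρ : 0 < ρ) (hρL : 10 * ρ < L) (m : ℕ) :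
    ∫ u in closedBall 0 (2 * ρ) \ closedBall 0 ρ,
        (1 - (uniformTorus d L).real (closedBall 0 ρ ∪ (· - u) ⁻¹' closedBall 0 ρ)) ^ m
          ∂uniformTorus d L =
      ρ ^ d * annulusIntegral d ρ (L ^ d) m / L ^ d := by
  have hpreimage : closedBall 0 (2 * ρ) ∩ torusMk L ⁻¹' (closedBall 0 (2 * ρ) \ closedBall 0 ρ) =
      closedBall (0 : EuclideanSpace ℝ (Fin d)) (2 * ρ) \ closedBall 0 ρ := by
    rw [preimage_sdiff, ← inter_sdiff_assoc, closedBall_inter_preimage_torusMk_closedBall]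
    ext z
    simp only [Set.mem_sdiff, mem_preimage, mem_closedBall_zero_iff, and_congr_right_iff]
    intro hz
    rw [norm_torusMk Fact.out (by linarith)]
  rw [setIntegral_uniformTorus (by linarith) (measurableSet_closedBall.diff
    measurableSet_closedBall) sdiff_subset
    (measurable_one_sub_measureReal_union_pow _ measurableSet_closedBall m), hpreimage,
    annulusIntegral, ← setIntegral_annulus_fun_norm_div hd _ zero_le_one one_le_two hρ, one_mul]
  congr 1
  refine setIntegral_congr_fun (measurableSet_closedBall.diff measurableSet_closedBall)
    fun z hz => ?_
  rw [uniformTorus_real_union_closedBall_of_near hd hρ hρL (mem_closedBall_zero_iff.1 hz.1)]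

lemma setIntegral_uniformTorus_compl_closedBall_two_mul (hρ : 0 ≤ ρ) (hρL : 4 * ρ < L) (m : ℕ) :
    ∫ u in (closedBall 0 (2 * ρ))ᶜ,
        (1 - (uniformTorus d L).real (closedBall 0 ρ ∪ (· - u) ⁻¹' closedBall 0 ρ)) ^ m
          ∂uniformTorus d L =
      (1 - 2 ^ d * phi d ρ / L ^ d) * (1 - 2 * phi d ρ / L ^ d) ^ m := by
  have hfar : EqOn (fun u : EuclideanTorus d L =>
      (1 - (uniformTorus d L).real (closedBall 0 ρ ∪ (· - u) ⁻¹' closedBall 0 ρ)) ^ m)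
      (fun _ => (1 - 2 * phi d ρ / L ^ d) ^ m) (closedBall 0 (2 * ρ))ᶜ := fun u hu => by
    rw [mem_compl_iff, mem_closedBall_zero_iff, not_le] at hu
    beta_reduce
    rw [uniformTorus_real_union_closedBall_of_far hρ (by linarith) hu]
  rw [setIntegral_congr_fun measurableSet_closedBall.compl hfar, setIntegral_const,
    probReal_compl_eq_one_sub measurableSet_closedBall,
    uniformTorus_real_closedBall (by positivity) (by linarith), phi_mul, smul_eq_mul]

lemma setIntegral_uniformTorus_compl_closedBall (hd : 1 ≤ d) (hρ : 0 < ρ) (hρL : 10 * ρ < L)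
    (m : ℕ) :
    ∫ u in (closedBall 0 ρ)ᶜ,
        (1 - (uniformTorus d L).real (closedBall 0 ρ ∪ (· - u) ⁻¹' closedBall 0 ρ)) ^ m
          ∂uniformTorus d L =
      (1 - 2 ^ d * phi d ρ / L ^ d) * (1 - 2 * phi d ρ / L ^ d) ^ m +
        ρ ^ d * annulusIntegral d ρ (L ^ d) m / L ^ d := by
  have hsplit : (closedBall (0 : EuclideanTorus d L) ρ)ᶜ =
      (closedBall 0 (2 * ρ))ᶜ ∪ closedBall 0 (2 * ρ) \ closedBall 0 ρ := by
    ext u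
    simp only [mem_union, mem_compl_iff, Set.mem_sdiff, mem_closedBall_zero_iff, not_le]
    constructor
    · exact fun hu => (lt_or_ge (2 * ρ) ‖u‖).imp_right fun h => ⟨h, hu⟩
    · rintro (hu | hu) <;> linarith
  have hint : Integrable (fun u : EuclideanTorus d L =>
      (1 - (uniformTorus d L).real (closedBall 0 ρ ∪ (· - u) ⁻¹' closedBall 0 ρ)) ^ m)
      (uniformTorus d L) := by
    refine .of_mem_Icc 0 1 (measurable_one_sub_measureReal_union_pow _ measurableSet_closedBall
      m).aemeasurable (.of_forall fun u => ?_)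
    have hle := measureReal_le_one (μ := uniformTorus d L)
      (s := closedBall 0 ρ ∪ (· - u) ⁻¹' closedBall 0 ρ)
    exact ⟨pow_nonneg (sub_nonneg.2 hle) m,
      pow_le_one₀ (sub_nonneg.2 hle) (sub_le_self 1 measureReal_nonneg)⟩
  rw [hsplit, setIntegral_union (disjoint_compl_left.mono_right sdiff_subset)
    (measurableSet_closedBall.diff measurableSet_closedBall) hint.integrableOn hint.integrableOn,
    setIntegral_uniformTorus_compl_closedBall_two_mul hρ.le (by linarith),
    setIntegral_uniformTorus_annulus hd hρ hρL]

end PairIntegral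

section LimitingVariance

variable {d : ℕ} {ρ : ℝ}

lemma intervalIntegrable_exp_neg_omegaVol_mul_pow (hρ : 0 ≤ ρ) (k : ℕ) (a b : ℝ) :
    IntervalIntegrable (fun t => Real.exp (-(ρ ^ d * omegaVol d t)) * t ^ k) volume a b := by
  refine ((continuous_pow k).intervalIntegrable a b).norm.mono_fun ?_ ?_
  · exact ((measurable_omegaVol.const_mul _).neg.exp.mul
      (measurable_id.pow_const k)).aestronglyMeasurable
  · refine .of_forall fun t => ?_
    beta_reduce
    rw [norm_mul, norm_norm]
    refine mul_le_of_le_one_left (norm_nonneg _) ?_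
    rw [Real.norm_of_nonneg (Real.exp_nonneg _), Real.exp_le_one_iff, neg_nonpos]
    exact (pow_mul_omegaVol_mem_Icc hρ t).1

lemma Jint_sub_Jint (hρ : 0 ≤ ρ) (r s : ℝ) : Jint s d ρ - Jint r d ρ =
    d * unitBallVol d * ∫ t in r..s, Real.exp (-(ρ ^ d * omegaVol d t)) * t ^ (d - 1) := by
  rw [Jint, Jint, ← mul_sub, intervalIntegral.integral_interval_sub_left] <;>
    exact intervalIntegrable_exp_neg_omegaVol_mul_pow hρ _ _ _

lemma le_pow_mul_Jint_sub_Jint (hd : 1 ≤ d) (hρ : 0 ≤ ρ) :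
    (2 ^ d - 1) * phi d ρ * Real.exp (-(2 * phi d ρ)) ≤ ρ ^ d * (Jint 2 d ρ - Jint 1 d ρ) := by
  have hd_ne : (d : ℝ) ≠ 0 := by positivity
  have hpow : ∫ t in (1 : ℝ)..2, t ^ (d - 1) = (2 ^ d - 1) / d := by
    rw [integral_pow, Nat.sub_add_cancel hd, one_pow, ← Nat.cast_add_one, Nat.sub_add_cancel hd]
  have hmono : ∫ t in (1 : ℝ)..2, Real.exp (-(2 * phi d ρ)) * t ^ (d - 1) ≤
      ∫ t in (1 : ℝ)..2, Real.exp (-(ρ ^ d * omegaVol d t)) * t ^ (d - 1) := by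
    refine intervalIntegral.integral_mono_on one_le_two
      (((continuous_pow _).const_mul _).intervalIntegrable _ _)
      (intervalIntegrable_exp_neg_omegaVol_mul_pow hρ _ _ _) fun t ht => ?_
    have ht₀ : 0 ≤ t := zero_le_one.trans ht.1
    exact mul_le_mul_of_nonneg_right
      (Real.exp_le_exp.2 (neg_le_neg (pow_mul_omegaVol_mem_Icc hρ t).2)) (pow_nonneg ht₀ _)
  have hball : 0 ≤ unitBallVol d := unitBallVol_pos.le
  calc (2 ^ d - 1) * phi d ρ * Real.exp (-(2 * phi d ρ))
      = ρ ^ d * (d * unitBallVol d *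
          ∫ t in (1 : ℝ)..2, Real.exp (-(2 * phi d ρ)) * t ^ (d - 1)) := by
        rw [intervalIntegral.integral_const_mul, hpow, phi]
        field_simp
    _ ≤ ρ ^ d * (Jint 2 d ρ - Jint 1 d ρ) := by
        rw [Jint_sub_Jint hρ]
        gcongr

lemma gS_pos (hd : 1 ≤ d) (hρ : 0 < ρ) : 0 < gS d ρ := by
  have hφ : Real.exp (-phi d ρ) = Real.exp (phi d ρ) * Real.exp (-(2 * phi d ρ)) := by
    rw [← Real.exp_add]
    ring_nf
  calc 0 < (Real.exp (phi d ρ) - (1 - phi d ρ + phi d ρ ^ 2)) * Real.exp (-(2 * phi d ρ)) :=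
        mul_pos (sub_pos.2 (one_sub_add_sq_lt_exp (phi_pos hρ))) (Real.exp_pos _)
    _ = Real.exp (-phi d ρ) -
          (1 + (2 ^ d - 2) * phi d ρ + phi d ρ ^ 2) * Real.exp (-(2 * phi d ρ)) +
          (2 ^ d - 1) * phi d ρ * Real.exp (-(2 * phi d ρ)) := by
        rw [hφ]
        ring
    _ ≤ gS d ρ := add_le_add_right (le_pow_mul_Jint_sub_Jint hd hρ.le) _

end LimitingVariance

section IsolatedPoints

lemma ae_injective_pi {X : Type*} [MeasurableSpace X] [MeasurableEq X] (ν : Measure X)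
    [SigmaFinite ν] [NullSingletonClass ν] (n : ℕ) :
    ∀ᵐ ω ∂Measure.pi fun _ : Fin n => ν, Function.Injective ω := by
  have hne (i j : Fin n) (hij : i ≠ j) : ∀ᵐ ω ∂Measure.pi fun _ : Fin n => ν, ω i ≠ ω j := by
    obtain _ | n := n
    · exact i.elim0
    · obtain ⟨j, rfl⟩ := Fin.exists_succAbove_eq hij.symm
      have hmeas : MeasurableSet {ω : Fin (n + 1) → X | ω i = ω (i.succAbove j)} :=
        measurableSet_eq_fun (measurable_pi_apply i) (measurable_pi_apply _)
      simp only [ae_iff, not_ne_iff, pi_apply_eq_lintegral_insertNth ν i hmeas, mem_ofPred_eq,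
        Fin.insertNth_apply_same, Fin.insertNth_apply_succAbove, eq_comm (b := (_ : Fin n → X) j),
        Measure.pi_hyperplane, lintegral_zero]
  filter_upwards [ae_all_iff.2 fun i => ae_all_iff.2 fun j => ae_all_iff.2 (hne i j)] with ω hω
  exact fun i j => not_imp_not.1 (hω i j)

variable {d : ℕ} {L ρ : ℝ}

lemma range_inter_torBall_eq_singleton_iff (hρ : 0 ≤ ρ) {ι : Type*} {ω : ι → Fin d → ℝ}
    (hω : Function.Injective ω) (hbox : ∀ i, ω i ∈ box d L) (i : ι) :
    range ω ∩ torBall L (ω i) ρ = {ω i} ↔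
      (fun k => torusMk L (WithLp.toLp 2 (ω k))) ∈ isolatedEvent (closedBall 0 ρ) i := by
  have hself : ω i ∈ range ω ∩ torBall L (ω i) ρ := by
    refine ⟨mem_range_self i, hbox i, ?_⟩
    rwa [torDist_eq_norm_torusMk_sub, sub_self, norm_zero]
  have hball (k : ι) : ω k ∈ torBall L (ω i) ρ ↔
      torusMk L (WithLp.toLp 2 (ω k)) - torusMk L (WithLp.toLp 2 (ω i)) ∈ closedBall 0 ρ := by
    rw [mem_closedBall_zero_iff, norm_sub_rev, ← torDist_eq_norm_torusMk_sub]
    exact and_iff_right (hbox k)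
  rw [eq_singleton_iff_unique_mem, and_iff_right hself]
  refine ⟨fun h k hki hk => hki (hω (h _ ⟨mem_range_self k, (hball k).2 hk⟩)), ?_⟩
  rintro h _ ⟨⟨k, rfl⟩, hk⟩
  by_contra hne
  exact h k (ne_of_apply_ne ω hne) ((hball k).1 hk)

lemma nullSingletonClass_uniformBox (hd : 1 ≤ d) : NullSingletonClass (uniformBox d L) where
  measure_singleton x := by
    have : Nonempty (Fin d) := ⟨⟨0, hd⟩⟩
    rw [uniformBox, Measure.smul_apply, measure_singleton, smul_zero]

lemma ae_mem_box : ∀ᵐ x ∂uniformBox d L, x ∈ box d L :=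
  Measure.ae_smul_measure (ae_restrict_mem (.univ_pi fun _ => measurableSet_Ico)) _

variable {n : ℕ}

lemma isolCount_ae_eq (hd : 1 ≤ d) (hρ : 0 ≤ ρ) [Fact (0 < sideLen d n)] :
    isolCount d n ρ =ᵐ[binppLaw d n] fun ω => ∑ i,
      (isolatedEvent (closedBall 0 ρ) i).indicator 1
        fun k => torusMk (sideLen d n) (WithLp.toLp 2 (ω k)) := by
  have := nullSingletonClass_uniformBox (L := sideLen d n) hd
  have hbox : ∀ᵐ ω ∂binppLaw d n, ∀ i, ω i ∈ box d (sideLen d n) :=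
    ae_all_iff.2 fun _ => Measure.tendsto_eval_ae_ae.eventually ae_mem_box
  filter_upwards [ae_injective_pi (uniformBox d (sideLen d n)) n, hbox] with ω hinj hmem
  simp only [isolCount, range_inter_torBall_eq_singleton_iff hρ hinj hmem, indicator_apply,
    Pi.one_apply]

lemma sideLen_pow (hd : 1 ≤ d) (n : ℕ) : sideLen d n ^ d = n :=
  Real.rpow_inv_natCast_pow n.cast_nonneg (Nat.one_le_iff_ne_zero.1 hd)

lemma tendsto_sideLen (hd : 1 ≤ d) : Tendsto (sideLen d) atTop atTop :=
  (tendsto_rpow_atTop (by positivity)).comp tendsto_natCast_atTop_atTop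

lemma variance_isolCount (hd : 1 ≤ d) (hρ : 0 < ρ) (hn : 2 ≤ n) (hρL : 10 * ρ < sideLen d n) :
    variance (isolCount d n ρ) (binppLaw d n) =
      n * ((1 - phi d ρ / n) ^ (n - 1)
        + (n - 1) * ((1 - 2 ^ d * phi d ρ / n) * (1 - 2 * phi d ρ / n) ^ (n - 2)
          + ρ ^ d * annulusIntegral d ρ n (n - 2) / n)
        - n * ((1 - phi d ρ / n) ^ (n - 1)) ^ 2) := by
  have : Fact (0 < sideLen d n) := ⟨by linarith⟩
  have hmp : MeasurePreserving
      (fun (ω : Fin n → Fin d → ℝ) k => torusMk (sideLen d n) (WithLp.toLp 2 (ω k)))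
      (binppLaw d n) (Measure.pi fun _ => uniformTorus d (sideLen d n)) :=
    measurePreserving_pi _ _ fun _ => measurePreserving_torusMk_uniformBox
  have hcount : Measurable fun ω : Fin n → EuclideanTorus d (sideLen d n) =>
      ∑ i, ((isolatedEvent (closedBall 0 ρ) i).indicator 1 ω : ℝ) :=
    Finset.measurable_fun_sum _ fun i _ =>
      measurable_one.indicator (measurableSet_isolatedEvent measurableSet_closedBall i)
  rw [variance_congr (isolCount_ae_eq hd hρ.le), hmp.variance_fun_comp hcount.aemeasurable,
    variance_sum_indicator_isolatedEvent _ measurableSet_closedBall (by simp) hn,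
    uniformTorus_real_closedBall hρ.le (by linarith),
    setIntegral_uniformTorus_compl_closedBall hd hρ hρL, sideLen_pow hd]

-- The two terms of order `n`, from `(n - 1) P(A ∩ B)` and `n P(A)^2`, are paired up.
lemma variance_isolCount_div (hd : 1 ≤ d) (hρ : 0 < ρ) (hn : 2 ≤ n)
    (hρL : 10 * ρ < sideLen d n) :
    variance (isolCount d n ρ) (binppLaw d n) / n =
      (1 - phi d ρ / n) ^ (n - 1)
        - n * (((1 - phi d ρ / n) ^ 2) ^ (n - 1) - (1 - 2 * phi d ρ / n) ^ (n - 1))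
        - (1 + (2 ^ d - 2) * phi d ρ - 2 ^ d * phi d ρ / n) * (1 - 2 * phi d ρ / n) ^ (n - 2)
        + (1 - 1 / n) * (ρ ^ d * annulusIntegral d ρ n (n - 2)) := by
  have hn_ne : (n : ℝ) ≠ 0 := by positivity
  have hsucc : n - 1 = n - 2 + 1 := by omega
  rw [variance_isolCount hd hρ hn hρL, mul_div_cancel_left₀ _ hn_ne, pow_right_comm _ 2,
    hsucc, pow_succ (1 - 2 * phi d ρ / n) (n - 2)]
  field_simp
  ring

lemma tendsto_annulusIntegral (hρ : 0 ≤ ρ) (k : ℕ) :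
    Tendsto (fun n : ℕ => annulusIntegral d ρ n (n - k)) atTop (𝓝 (Jint 2 d ρ - Jint 1 d ρ)) := by
  rw [Jint_sub_Jint hρ]
  exact (tendsto_intervalIntegral_one_sub_div_pow_sub_mul (measurable_omegaVol.const_mul _)
    (pow_mul_omegaVol_mem_Icc hρ) ((continuous_pow _).intervalIntegrable _ _) k).const_mul _

end IsolatedPoints

/-- (3.3) of Theorem 2.3: the normalized variance of the number of isolated points `S`
converges to `g_S(ρ)`, which is strictly positive. -/
theorem variance_isolCount_limit (d : ℕ) (hd : 1 ≤ d) (ρ : ℝ) (hρ : 0 < ρ) :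
    Tendsto (fun n : ℕ => variance (isolCount d n ρ) (binppLaw d n) / n) atTop
        (nhds (gS d ρ)) ∧
      0 < gS d ρ := by
  have hcoeff : Tendsto (fun n : ℕ => 1 + (2 ^ d - 2) * phi d ρ - 2 ^ d * phi d ρ / n) atTop
      (𝓝 (1 + (2 ^ d - 2) * phi d ρ)) := by
    simpa using (tendsto_const_div_atTop_nhds_zero_nat (2 ^ d * phi d ρ)).const_sub
      (1 + (2 ^ d - 2) * phi d ρ)
  have hone : Tendsto (fun n : ℕ => 1 - 1 / (n : ℝ)) atTop (𝓝 1) := by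
    simpa using (tendsto_const_div_atTop_nhds_zero_nat (1 : ℝ)).const_sub 1
  have hlim := (((tendsto_one_sub_div_pow_sub (phi d ρ) 1).sub
    (tendsto_mul_sq_pow_sub_pow (phi d ρ))).sub
    (hcoeff.mul (tendsto_one_sub_div_pow_sub (2 * phi d ρ) 2))).add
    (hone.mul ((tendsto_annulusIntegral (d := d) hρ.le 2).const_mul (ρ ^ d)))
  refine ⟨?_, gS_pos hd hρ⟩
  convert hlim.congr' ?_ using 2
  · rw [gS]
    ring
  · filter_upwards [eventually_ge_atTop 2, (tendsto_sideLen hd).eventually_gt_atTop (10 * ρ)]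
      with n hn hρL
    exact (variance_isolCount_div hd hρ hn hρL).symm

end
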